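/- For every α∈(0,1] and θ > 0, the integral ∫_0^∞ (ln t + (ln θ)/α + γ)²·θ t^{α−1} E_{α,α}(−θ t^α) dt converges and equals π²·(1/(3α²) − 1/6), where γ is the Euler–Mascheroni constant. (This is the variance of the logarithm of a Mittag-Leffler ML(α,θ) waiting time.) -/

import Mathlib

open MeasureTheory Real

/-- Two-parameter Mittag-Leffler function `E_{β,γ}(w) = ∑ w^r / Γ(βr+γ)`. -/
noncomputable def mittagLeffler (β γ w : ℝ) : ℝ :=
  ∑' r : ℕ, w ^ r / Real.Gamma (β * r + γ)



lemma laplace_unique (h : ℝ → ℝ) (hi : IntegrableOn h (Set.Ioi 0))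
    (h0 : ∀ n : ℕ, ∫ t in Set.Ioi (0:ℝ), Real.exp (-(n * t)) * h t = 0) :
    ∀ᵐ t, t ∈ Set.Ioi (0:ℝ) → h t = 0 := by
  refine isOpen_Ioi.ae_eq_zero_of_integral_contDiff_smul_eq_zero hi.locallyIntegrableOn ?_
  intro φ hφ hc hsub
  have hφc : Continuous φ := hφ.continuous
  have hfull : ∫ x, φ x • h x = ∫ x in Set.Ioi (0:ℝ), φ x * h x := by
    rw [← integral_indicator measurableSet_Ioi]
    congr 1; ext x
    by_cases hx : x ∈ Set.Ioi (0:ℝ)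
    · simp [Set.indicator_of_mem hx]
    · have : φ x = 0 := by
        by_contra hne
        exact hx (hsub (subset_tsupport _ hne))
      simp [Set.indicator_of_notMem hx, this]
  rw [hfull]
  have hpoly : ∀ p : Polynomial ℝ,
      IntegrableOn (fun t => p.eval (Real.exp (-t)) * h t) (Set.Ioi 0) ∧ 
      ∫ t in Set.Ioi (0:ℝ), p.eval (Real.exp (-t)) * h t = 0 := by
    intro p
    induction p using Polynomial.induction_on' with
    | add p q hp hq =>
      simp only [Polynomial.eval_add, add_mul]
      refine ⟨hp.1.add hq.1, ?_⟩
      rw [integral_add hp.1 hq.1, hp.2, hq.2, add_zero]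
    | monomial n a =>
      have e : ∀ t : ℝ, (Polynomial.monomial n a).eval (Real.exp (-t)) * h t
          = a * (Real.exp (-(n * t)) * h t) := by
        intro t
        rw [Polynomial.eval_monomial, ← Real.exp_nat_mul]
        ring_nf
      simp only [e]
      constructor
      · refine Integrable.const_mul ?_ a
        refine Integrable.bdd_mul (c := 1) hi (by fun_prop) ?_
        filter_upwards [ae_restrict_mem measurableSet_Ioi] with t ht
        rw [Real.norm_of_nonneg (Real.exp_pos _).le]
        apply Real.exp_le_one_iff.mpr
        have : (0:ℝ) < t := ht
        have : 0 ≤ (n:ℝ) * t := by positivity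
        linarith
      · rw [integral_const_mul, h0, mul_zero]
  -- continuity of ψ
  have hψ : ContinuousOn (fun x : ℝ => if 0 < x then φ (-Real.log x) else 0) (Set.Icc 0 1) := by
    obtain ⟨R, hR⟩ := hc.isCompact.isBounded.subset_closedBall 0
    intro x hx
    apply ContinuousAt.continuousWithinAt
    rcases hx.1.lt_or_eq with hx0 | hx0
    · have : (fun x : ℝ => φ (-Real.log x)) =ᶠ[nhds x]
        (fun x : ℝ => if 0 < x then φ (-Real.log x) else 0) := by
        filter_upwards [lt_mem_nhds hx0] with y hy
        simp [hy]
      refine ContinuousAt.congr ?_ this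
      exact hφc.continuousAt.comp (Real.continuousAt_log hx0.ne').neg
    · subst hx0
      have : (fun x : ℝ => (0:ℝ)) =ᶠ[nhds 0]
        (fun x : ℝ => if 0 < x then φ (-Real.log x) else 0) := by
        filter_upwards [gt_mem_nhds (Real.exp_pos (-R))] with y hy
        split_ifs with h1
        · symm
          by_contra hne
          have := hR (subset_tsupport _ hne)
          rw [Metric.mem_closedBall, dist_zero_right] at this
          have h2 := (le_abs_self _).trans this
          have h3 := (Real.log_lt_iff_lt_exp h1).mpr hy
          linarith
        · rfl
      exact continuousAt_const.congr this
  have h_int : IntegrableOn (fun t => φ t * h t) (Set.Ioi 0) := by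
    obtain ⟨C, hC⟩ := hφc.bounded_above_of_compact_support hc
    exact Integrable.bdd_mul (c := C) hi (by fun_prop) (Filter.Eventually.of_forall hC)
  have key : ∀ ε > 0, |∫ x in Set.Ioi (0:ℝ), φ x * h x| ≤ ε * ∫ x in Set.Ioi (0:ℝ), ‖h x‖ := by
    intro ε hε
    obtain ⟨p, hp⟩ := exists_polynomial_near_of_continuousOn 0 1 _ hψ ε hε
    have e1 : ∫ x in Set.Ioi (0:ℝ), φ x * h x
        = ∫ x in Set.Ioi (0:ℝ), (φ x * h x - p.eval (Real.exp (-x)) * h x) := by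
      rw [integral_sub h_int (hpoly p).1, (hpoly p).2, sub_zero]
    rw [e1, ← integral_const_mul, ← Real.norm_eq_abs]
    refine norm_integral_le_of_norm_le (hi.norm.const_mul ε) ?_
    filter_upwards [ae_restrict_mem measurableSet_Ioi] with t ht
    rw [← sub_mul, norm_mul]
    have ht' : (0:ℝ) < t := ht
    have := hp (Real.exp (-t)) ⟨(Real.exp_pos _).le, Real.exp_le_one_iff.mpr (by linarith)⟩
    simp only [Real.exp_pos, if_true, Real.log_exp, neg_neg] at this
    rw [abs_sub_comm] at this
    exact mul_le_mul_of_nonneg_right this.le (norm_nonneg _)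
  have hlim : Filter.Tendsto (fun ε : ℝ => ε * ∫ x in Set.Ioi (0:ℝ), ‖h x‖) (nhdsWithin 0 (Set.Ioi 0)) (nhds 0) := by
    have : Filter.Tendsto (fun ε : ℝ => ε * ∫ x in Set.Ioi (0:ℝ), ‖h x‖) (nhds 0) (nhds (0 * ∫ x in Set.Ioi (0:ℝ), ‖h x‖)) :=
      Filter.tendsto_id.mul_const _
    rw [zero_mul] at this
    exact this.mono_left nhdsWithin_le_nhds
  have : |∫ x in Set.Ioi (0:ℝ), φ x * h x| ≤ 0 :=
    ge_of_tendsto hlim (by filter_upwards [self_mem_nhdsWithin] with ε hε using key ε hε)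
  exact abs_nonpos_iff.mp this

lemma expO (k : ℕ) : (fun t : ℝ => ((Real.log t ^ k * Real.exp (-t) : ℝ) : ℂ)) =O[Filter.atTop] fun x : ℝ => x ^ (-(2:ℝ)) := by
  have h1 : (fun t : ℝ => Real.log t ^ k) =O[Filter.atTop] fun t : ℝ => t ^ (k:ℝ) := by
    have := ((isLittleO_log_rpow_atTop (one_pos)).isBigO).pow k
    simpa using this
  have h2 : (fun t : ℝ => Real.exp (-t)) =O[Filter.atTop] fun t : ℝ => t ^ (-2-(k:ℝ)) := by
    simpa only [neg_one_mul] using (isLittleO_exp_neg_mul_rpow_atTop zero_lt_one _).isBigO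
  have h3 := h1.mul h2
  rw [← Asymptotics.isBigO_norm_left]
  simp_rw [Complex.norm_real]
  rw [Asymptotics.isBigO_norm_left]
  refine h3.trans (Filter.EventuallyEq.isBigO ?_)
  filter_upwards [Filter.eventually_gt_atTop 0] with t ht
  rw [← Real.rpow_add ht]; congr 1; ring

lemma expO0 (k : ℕ) : (fun t : ℝ => ((Real.log t ^ k * Real.exp (-t) : ℝ) : ℂ)) =O[nhdsWithin 0 (Set.Ioi 0)] fun x : ℝ => x ^ (-(1/2:ℝ)) := by
  have h1 : (fun t : ℝ => Real.log t ^ k) =O[nhdsWithin 0 (Set.Ioi 0)] fun t : ℝ => t ^ (-(1/2:ℝ)) := by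
    rcases Nat.eq_zero_or_pos k with rfl | hk
    · have := (isLittleO_log_rpow_nhdsGT_zero (r := -(1/2)) (by norm_num)).isBigO
      simp only [pow_zero]
      refine Asymptotics.IsBigO.trans ?_ this
      refine Asymptotics.IsBigO.of_bound 1 ?_
      filter_upwards [Ioo_mem_nhdsGT (Real.exp_pos (-1))] with t ht
      have := (Real.log_lt_iff_lt_exp ht.1).mpr ht.2
      rw [norm_one, one_mul, Real.norm_eq_abs, abs_of_neg (by linarith)]
      linarith
    · have := ((isLittleO_log_rpow_nhdsGT_zero (r := -(1/2)/k) (div_neg_of_neg_of_pos (by norm_num) (by positivity))).isBigO).pow k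
      refine this.trans (Filter.EventuallyEq.isBigO ?_)
      filter_upwards [self_mem_nhdsWithin] with t ht
      rw [← Real.rpow_mul_natCast (le_of_lt ht)]
      congr 1; field_simp
  have h2 : (fun t : ℝ => Real.exp (-t)) =O[nhdsWithin 0 (Set.Ioi 0)] fun t : ℝ => (1:ℝ) := by
    refine Asymptotics.IsBigO.of_bound 1 ?_
    filter_upwards [self_mem_nhdsWithin] with t ht
    have : (0:ℝ) < t := ht
    simp; linarith
  have h3 := h1.mul h2
  rw [← Asymptotics.isBigO_norm_left]
  simp_rw [Complex.norm_real]
  rw [Asymptotics.isBigO_norm_left]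
  simpa using h3

lemma logexp_deriv (k : ℕ) {s : ℂ} (hs : 1/2 < s.re) (hs2 : s.re < 2) :
   MellinConvergent (fun t : ℝ => ((Real.log t ^ (k+1) * Real.exp (-t) : ℝ) : ℂ)) s ∧
   HasDerivAt (mellin (fun t : ℝ => ((Real.log t ^ k * Real.exp (-t) : ℝ) : ℂ)))
    (mellin (fun t : ℝ => ((Real.log t ^ (k+1) * Real.exp (-t) : ℝ) : ℂ)) s) s := by
  have := mellin_hasDerivAt_of_isBigO_rpow (E := ℂ) (s := s) ?_ (expO k) hs2 (expO0 k) hs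
  · have e : (fun t : ℝ => ((Real.log t ^ (k+1) * Real.exp (-t) : ℝ) : ℂ)) = 
      fun t => Real.log t • ((Real.log t ^ k * Real.exp (-t) : ℝ) : ℂ) := by
      ext t; simp [pow_succ]; ring
    rw [e]; exact this
  · refine ContinuousOn.locallyIntegrableOn ?_ measurableSet_Ioi
    apply Complex.continuous_ofReal.comp_continuousOn
    refine ContinuousOn.mul ?_ (by fun_prop)
    exact ContinuousOn.pow (Real.continuousOn_log.mono (fun x hx => ne_of_gt hx)) _

noncomputable def G (k : ℕ) : ℂ → ℂ := mellin (fun t : ℝ => ((Real.log t ^ k * Real.exp (-t) : ℝ) : ℂ))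

lemma G0 {z : ℂ} (hz : 0 < z.re) : G 0 z = Complex.Gamma z := by
  rw [Complex.Gamma_eq_integral hz, Complex.GammaIntegral_eq_mellin, G]
  congr 1; ext t; simp

lemma G_deriv (k : ℕ) {s : ℂ} (hs : 1/2 < s.re) (hs2 : s.re < 2) : HasDerivAt (G k) (G (k+1) s) s :=
  (logexp_deriv k hs hs2).2

lemma G1 : G 1 1 = -(Real.eulerMascheroniConstant : ℂ) := by
  have h := G_deriv 0 (s := 1) (by norm_num) (by norm_num)
  refine h.unique (Complex.hasDerivAt_Gamma_one.congr_of_eventuallyEq ?_)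
  have : {z : ℂ | 0 < z.re} ∈ nhds (1:ℂ) := (Complex.continuous_re.isOpen_preimage _ isOpen_Ioi).mem_nhds (by simp)
  filter_upwards [this] with z hz using G0 hz

lemma G2 : G 2 1 = ((Real.eulerMascheroniConstant ^ 2 + π ^ 2 / 6 : ℝ) : ℂ) := by
  set U : Set ℂ := Metric.ball 0 (1/2) with hU
  have hUre : ∀ z ∈ U, |z.re| < 1/2 := by
    intro z hz
    rw [hU, mem_ball_zero_iff] at hz
    exact (Complex.abs_re_le_norm z).trans_lt hz
  have hp : ∀ k, ∀ z ∈ U, HasDerivAt (fun z => G k (1+z)) (G (k+1) (1+z)) z := by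
    intro k z hz
    have := abs_lt.mp (hUre z hz)
    have h := G_deriv k (s := 1 + z) (by simp; linarith) (by simp; linarith)
    simpa using h.comp_const_add 1 z
  have hm : ∀ k, ∀ z ∈ U, HasDerivAt (fun z => G k (1-z)) (-G (k+1) (1-z)) z := by
    intro k z hz
    have := abs_lt.mp (hUre z hz)
    have h := G_deriv k (s := 1 - z) (by simp; linarith) (by simp; linarith)
    simpa using h.comp_const_sub 1 z
  -- product
  set H : ℂ → ℂ := fun z => G 0 (1+z) * G 0 (1-z) with hH
  set H1 : ℂ → ℂ := fun z => G 1 (1+z) * G 0 (1-z) + G 0 (1+z) * (-G 1 (1-z)) with hH1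
  set H2 : ℂ → ℂ := fun z => (G 2 (1+z) * G 0 (1-z) + G 1 (1+z) * (-G 1 (1-z))) + 
    (G 1 (1+z) * (-G 1 (1-z)) + G 0 (1+z) * (-(-G 2 (1-z)))) with hH2
  have hd1 : ∀ z ∈ U, HasDerivAt H (H1 z) z := fun z hz => (hp 0 z hz).mul (hm 0 z hz)
  have hd2 : ∀ z ∈ U, HasDerivAt H1 (H2 z) z := fun z hz => 
    ((hp 1 z hz).mul (hm 0 z hz)).add ((hp 0 z hz).mul (hm 1 z hz).neg)
  have h0U : (0:ℂ) ∈ U := by simp [hU]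
  have hd3 : ∃ D, HasDerivAt H2 D 0 := ⟨_, 
    (((hp 2 0 h0U).mul (hm 0 0 h0U)).add ((hp 1 0 h0U).mul (hm 1 0 h0U).neg)).add 
    (((hp 1 0 h0U).mul (hm 1 0 h0U).neg).add ((hp 0 0 h0U).mul (hm 2 0 h0U).neg.neg))⟩
  obtain ⟨D, hD⟩ := hd3
  have hUo : IsOpen U := Metric.isOpen_ball
  have hs : ∀ z : ℂ, HasDerivAt (fun z : ℂ => Complex.sin (π * z)) (Complex.cos (π * z) * π) z := by
    intro z; simpa using ((hasDerivAt_id z).const_mul (π:ℂ)).csin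
  have hc : ∀ z : ℂ, HasDerivAt (fun z : ℂ => Complex.cos (π * z)) (-Complex.sin (π * z) * π) z := by
    intro z; simpa using ((hasDerivAt_id z).const_mul (π:ℂ)).ccos
  have id0 : ∀ z ∈ U, H z * Complex.sin (π * z) = π * z := by
    intro z hz
    have := abs_lt.mp (hUre z hz)
    by_cases h0 : z = 0
    · simp [h0]
    simp only [hH]
    rw [G0 (by simp; linarith), G0 (by simp; linarith), add_comm 1 z, Complex.Gamma_add_one z h0, mul_assoc z,
      Complex.Gamma_mul_Gamma_one_sub]
    have : Complex.sin (π * z) ≠ 0 := by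
      rw [Complex.sin_ne_zero_iff]
      intro k hk
      have hπ : (π:ℂ) ≠ 0 := by exact_mod_cast Real.pi_ne_zero
      have hk' : z = k := by
        rw [mul_comm] at hk; exact mul_right_cancel₀ hπ hk
      have h5 := hUre z hz
      rw [hk'] at h5
      simp only [Complex.intCast_re] at h5
      have h6 : |(k:ℝ)| < 1 := by linarith
      have h7 : k = 0 := by
        have : |k| < 1 := by exact_mod_cast h6
        exact Int.abs_lt_one_iff.mp this
      apply h0; rw [hk', h7]; simp
    rw [mul_assoc, div_mul_cancel₀ _ this, mul_comm]
  have id1 : ∀ z ∈ U, H1 z * Complex.sin (π * z) + H z * (Complex.cos (π * z) * π) = π := by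
    intro z hz
    have h1 := (hd1 z hz).mul (hs z)
    have h2 : HasDerivAt (fun z : ℂ => (π:ℂ) * z) π z := by simpa using (hasDerivAt_id z).const_mul (π:ℂ)
    refine h1.unique (h2.congr_of_eventuallyEq ?_)
    filter_upwards [hUo.mem_nhds hz] with w hw using id0 w hw
  have id2 : ∀ z ∈ U, (H2 z * Complex.sin (π * z) + H1 z * (Complex.cos (π * z) * π)) + (H1 z * (Complex.cos (π * z) * π)
      + H z * ((-Complex.sin (π * z) * π) * π)) = 0 := by
    intro z hz
    have h1 := ((hd2 z hz).mul (hs z)).add ((hd1 z hz).mul ((hc z).mul_const (π:ℂ)))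
    refine h1.unique ((hasDerivAt_const z (π:ℂ)).congr_of_eventuallyEq ?_)
    filter_upwards [hUo.mem_nhds hz] with w hw using id1 w hw
  have id3 := (((hD.mul (hs 0)).add ((hd2 0 h0U).mul ((hc 0).mul_const (π:ℂ)))).add
    (((hd2 0 h0U).mul ((hc 0).mul_const (π:ℂ))).add ((hd1 0 h0U).mul (((hs 0).neg.mul_const (π:ℂ)).mul_const (π:ℂ))))).unique 
    ((hasDerivAt_const 0 (0:ℂ)).congr_of_eventuallyEq (by
      filter_upwards [hUo.mem_nhds h0U] with w hw using id2 w hw))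
  have g01 : G 0 1 = 1 := by rw [G0 (by simp)]; simp
  simp [hH2, hH, G1, g01] at id3
  have hπ : (π:ℂ) ≠ 0 := by exact_mod_cast Real.pi_ne_zero
  push_cast
  have : (π:ℂ) * (6 * G 2 1 - 6 * ((Real.eulerMascheroniConstant:ℂ)^2 + π^2/6)) = 0 := by
    linear_combination id3
  rcases mul_eq_zero.mp this with h | h
  · exact absurd h hπ
  · linear_combination h / 6

lemma G_real (k : ℕ) : ((∫ t in Set.Ioi (0:ℝ), Real.log t ^ k * Real.exp (-t) : ℝ) : ℂ) = G k 1 := by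
  rw [G, mellin, ← integral_complex_ofReal]
  simp

lemma logexp_int (k : ℕ) : IntegrableOn (fun t : ℝ => Real.log t ^ (k+1) * Real.exp (-t)) (Set.Ioi 0) := by
  have := (logexp_deriv k (s := 1) (by norm_num) (by norm_num)).1
  rw [MellinConvergent] at this
  simp only [sub_self, Complex.cpow_zero, one_smul] at this
  have h := this.re
  simp only [RCLike.re_eq_complex_re, Complex.ofReal_re] at h
  exact h

lemma log1_val : ∫ t in Set.Ioi (0:ℝ), Real.log t ^ 1 * Real.exp (-t) = -Real.eulerMascheroniConstant := by
  have := G_real 1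
  rw [G1] at this; exact_mod_cast this

lemma log2_val : ∫ t in Set.Ioi (0:ℝ), Real.log t ^ 2 * Real.exp (-t) = Real.eulerMascheroniConstant ^ 2 + π ^ 2 / 6 := by
  have := G_real 2
  rw [G2] at this; exact_mod_cast this

lemma log_sq_one (c : ℝ) : IntegrableOn (fun t : ℝ => (Real.log t + c) ^ 2 * Real.exp (-t)) (Set.Ioi 0) ∧
    ∫ t in Set.Ioi (0:ℝ), (Real.log t + c) ^ 2 * Real.exp (-t) = π ^ 2 / 6 + (c - Real.eulerMascheroniConstant) ^ 2 := by
  have i2 := logexp_int 1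
  have i1 := logexp_int 0
  have i0 : IntegrableOn (fun t : ℝ => Real.exp (-t)) (Set.Ioi 0) := integrableOn_exp_neg_Ioi 0
  have e : (fun t : ℝ => (Real.log t + c) ^ 2 * Real.exp (-t)) = 
    fun t => (Real.log t ^ (1+1) * Real.exp (-t) + (2 * c) * (Real.log t ^ (0+1) * Real.exp (-t))) + c^2 * Real.exp (-t) := by
    ext t; ring
  rw [e]
  refine ⟨(i2.add (i1.const_mul _)).add (i0.const_mul _), ?_⟩
  have i12 : IntegrableOn (fun t : ℝ => Real.log t ^ (1+1) * Real.exp (-t) + (2 * c) * (Real.log t ^ (0+1) * Real.exp (-t))) (Set.Ioi 0) :=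
    i2.add (i1.const_mul _)
  rw [integral_add i12 (i0.const_mul _), integral_add i2 (i1.const_mul _), integral_const_mul, integral_const_mul]
  simp only [Nat.reduceAdd]
  rw [log1_val, log2_val, integral_exp_neg_Ioi_zero]
  ring

lemma log_sq_exp (c r : ℝ) (hr : 0 < r) : IntegrableOn (fun t : ℝ => (Real.log t + c) ^ 2 * (r * Real.exp (-(r * t)))) (Set.Ioi 0) ∧
    ∫ t in Set.Ioi (0:ℝ), (Real.log t + c) ^ 2 * (r * Real.exp (-(r * t))) = π ^ 2 / 6 + (c - Real.eulerMascheroniConstant - Real.log r) ^ 2 := by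
  obtain ⟨hi, hv⟩ := log_sq_one (c - Real.log r)
  have e : Set.EqOn (fun t : ℝ => r * ((Real.log (r * t) + (c - Real.log r)) ^ 2 * Real.exp (-(r * t)))) 
    (fun t : ℝ => (Real.log t + c) ^ 2 * (r * Real.exp (-(r * t)))) (Set.Ioi 0) := by
    intro t ht
    simp only
    rw [Real.log_mul hr.ne' (ne_of_gt ht)]; ring
  constructor
  · refine IntegrableOn.congr_fun ?_ e measurableSet_Ioi
    refine Integrable.const_mul ?_ r
    have := (integrableOn_Ioi_comp_mul_left_iff (fun t : ℝ => (Real.log t + (c - Real.log r)) ^ 2 * Real.exp (-t)) 0 hr).mpr (by simpa using hi)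
    exact this
  · rw [← setIntegral_congr_fun measurableSet_Ioi e, integral_const_mul]
    have := integral_comp_mul_left_Ioi (fun t : ℝ => (Real.log t + (c - Real.log r)) ^ 2 * Real.exp (-t)) 0 hr
    rw [this, mul_zero, hv, smul_eq_mul]
    field_simp
    ring

noncomputable def kk (α y : ℝ) : ℝ :=
  (Real.sin (π * α) / π) / (Real.exp (α * y) + Real.exp (-(α * y)) + 2 * Real.cos (π * α))

lemma kk_def (α y : ℝ) : kk α y =
  (Real.sin (π * α) / π) / (Real.exp (α * y) + Real.exp (-(α * y)) + 2 * Real.cos (π * α)) := rfl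

lemma sin_pos' {α : ℝ} (h0 : 0 < α) (h1 : α < 1) : 0 < Real.sin (π * α) :=
  Real.sin_pos_of_pos_of_lt_pi (by positivity) (by nlinarith [Real.pi_pos])

lemma den_pos {α : ℝ} (h0 : 0 < α) (h1 : α < 1) (y : ℝ) :
    0 < Real.exp (α * y) + Real.exp (-(α * y)) + 2 * Real.cos (π * α) := by
  have hs := sin_pos' h0 h1
  have hc : -1 < Real.cos (π * α) := by
    nlinarith [Real.sin_sq_add_cos_sq (π * α), Real.neg_one_le_cos (π * α), Real.cos_le_one (π * α)]
  have e : Real.exp (α * y) * Real.exp (-(α * y)) = 1 := by rw [← Real.exp_add]; simp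
  nlinarith [Real.exp_pos (α * y), Real.exp_pos (-(α * y)), sq_nonneg (Real.exp (α * y) - Real.exp (-(α * y)))]

lemma kk_pos {α : ℝ} (h0 : 0 < α) (h1 : α < 1) (y : ℝ) : 0 < kk α y :=
  div_pos (div_pos (sin_pos' h0 h1) Real.pi_pos) (den_pos h0 h1 y)

lemma kk_abs (α y : ℝ) : kk α |y| = kk α y := by
  rcases abs_choice y with h | h
  · rw [h]
  · rw [h]; simp only [kk, mul_neg, neg_neg]; congr 2; ring

lemma kk_continuous {α : ℝ} (h0 : 0 < α) (h1 : α < 1) : Continuous (kk α) := by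
  unfold kk
  exact Continuous.div (by fun_prop) (by fun_prop) (fun y => (den_pos h0 h1 y).ne')

lemma kk_half {α : ℝ} (h0 : 0 < α) (h1 : α < 1) :
    IntegrableOn (kk α) (Set.Ioi 0) ∧ ∫ y in Set.Ioi (0:ℝ), kk α y = 1/2 := by
  have hs := sin_pos' h0 h1
  set φ := π * α with hφ
  have hφ0 : 0 < φ := by positivity
  have hφ1 : φ < π := by rw [hφ]; nlinarith [Real.pi_pos]
  have hd : ∀ y ∈ Set.Ici (0:ℝ), HasDerivAt (fun y => Real.arctan ((Real.exp (α * y) + Real.cos φ) / Real.sin φ) / φ) (kk α y) y := by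
    intro y _
    have h := ((((((hasDerivAt_id y).const_mul α).exp).add_const (Real.cos φ)).div_const (Real.sin φ)).arctan).div_const φ
    refine h.congr_deriv ?_
    rw [kk_def, ← hφ]
    simp only [id]
    symm
    have e : Real.exp (-(α * y)) = (Real.exp (α * y))⁻¹ := Real.exp_neg _
    have hp := den_pos h0 h1 y
    rw [e] at hp ⊢
    rw [← hφ] at hp
    have hx := Real.exp_pos (α * y)
    set X := Real.exp (α * y)
    have sc := Real.sin_sq_add_cos_sq φ
    have hq : (0:ℝ) < X^2 + 1 + 2 * Real.cos φ * X := by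
      have := mul_pos hp hx
      have e2 : (X + X⁻¹ + 2 * Real.cos φ) * X = X^2 + 1 + 2 * Real.cos φ * X := by field_simp
      linarith
    have e3 : X + X⁻¹ + 2 * Real.cos φ = (X^2 + 1 + 2 * Real.cos φ * X) / X := by field_simp
    have e4 : 1 + ((X + Real.cos φ) / Real.sin φ)^2 = (X^2 + 1 + 2 * Real.cos φ * X) / Real.sin φ ^2 := by
      field_simp; linarith
    rw [e3, e4]
    have : φ = π * α := hφ
    clear_value φ
    subst this
    field_simp
  have hlim : Filter.Tendsto (fun y => Real.arctan ((Real.exp (α * y) + Real.cos φ) / Real.sin φ) / φ) Filter.atTop (nhds (π / 2 / φ)) := by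
    refine Filter.Tendsto.div_const ?_ φ
    refine (Real.tendsto_arctan_atTop.mono_right nhdsWithin_le_nhds).comp ?_
    refine Filter.Tendsto.atTop_div_const hs ?_
    refine Filter.tendsto_atTop_add_const_right _ _ ?_
    exact Real.tendsto_exp_atTop.comp (Filter.tendsto_id.const_mul_atTop h0)
  have hn : ∀ y ∈ Set.Ioi (0:ℝ), 0 ≤ kk α y := fun y _ => (kk_pos h0 h1 y).le
  refine ⟨integrableOn_Ioi_deriv_of_nonneg' hd hn hlim, ?_⟩
  rw [integral_Ioi_of_hasDerivAt_of_nonneg' hd hn hlim]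
  have : Real.arctan ((Real.exp (α * 0) + Real.cos φ) / Real.sin φ) = π / 2 - φ / 2 := by
    have h2 : (Real.exp (α * 0) + Real.cos φ) / Real.sin φ = Real.tan (π / 2 - φ / 2) := by
      rw [Real.tan_pi_div_two_sub, Real.tan_eq_sin_div_cos, inv_div]
      have a : Real.cos φ = 2 * Real.cos (φ/2) ^ 2 - 1 := by rw [← Real.cos_two_mul]; ring_nf
      have b : Real.sin φ = 2 * Real.sin (φ/2) * Real.cos (φ/2) := by rw [← Real.sin_two_mul]; ring_nf
      have c : 0 < Real.cos (φ/2) := Real.cos_pos_of_mem_Ioo ⟨by linarith, by linarith⟩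
      have d : 0 < Real.sin (φ/2) := Real.sin_pos_of_pos_of_lt_pi (by linarith) (by linarith)
      rw [a, b]; simp; field_simp
    rw [h2, Real.arctan_tan (by linarith) (by linarith)]
  rw [this]; field_simp; ring

lemma kk_int {α : ℝ} (h0 : 0 < α) (h1 : α < 1) : Integrable (kk α) ∧ ∫ y, kk α y = 1 := by
  have h : ∫ y, kk α y = 1 := by
    have := integral_comp_abs (f := kk α)
    simp only [kk_abs] at this
    rw [this, (kk_half h0 h1).2]; norm_num
  exact ⟨Integrable.of_integral_ne_zero (by rw [h]; norm_num), h⟩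

lemma ber3 (x : ℝ) : (Polynomial.map (algebraMap ℚ ℝ) (Polynomial.bernoulli 3)).eval x = x^3 - 3/2*x^2 + x/2 := by
  have b3 : bernoulli 3 = 0 := by rw [bernoulli_eq_bernoulli'_of_ne_one (by decide)]; simp
  have b2 : bernoulli 2 = 1/6 := by rw [bernoulli_eq_bernoulli'_of_ne_one (by decide)]; simp
  rw [Polynomial.bernoulli]
  simp [Finset.sum_range_succ, Polynomial.eval_monomial, b3, b2, bernoulli_one, bernoulli_zero]
  norm_num [Nat.choose]
  ring

lemma sin_series {α : ℝ} (h0 : 0 < α) (h1 : α < 1) :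
    HasSum (fun n : ℕ => 1 / (n:ℝ)^3 * ((-1)^n * Real.sin (n * (π * α)))) (π ^ 3 * α * (α^2-1) / 12) := by
  have := hasSum_one_div_nat_pow_mul_sin one_ne_zero (x := (α+1)/2) ⟨by linarith, by linarith⟩
  convert this using 1
  · ext n
    have : 2 * π * n * ((α+1)/2) = n * (π * α) + n * π := by ring
    rw [this, Real.sin_add_nat_mul_pi]; norm_num
  · rw [show 2 * 1 + 1 = 3 from rfl, ber3]
    simp [Nat.factorial]; ring

lemma kk_series {α : ℝ} (h0 : 0 < α) (h1 : α < 1) {y : ℝ} (hy : 0 < y) :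
    HasSum (fun n : ℕ => -(1/π) * ((-1)^n * Real.sin (n * (π * α)) * Real.exp (-(n * α * y)))) (kk α y) := by
  set z : ℂ := -(Complex.exp (-(α * y) + π * α * Complex.I)) with hz
  have hn : ‖z‖ < 1 := by
    rw [hz, norm_neg, Complex.norm_exp]
    simp; positivity
  have hs := Complex.hasSum_im (hasSum_geometric_of_norm_lt_one hn)
  have hs2 := hs.mul_left (-(1/π))
  have e1 : (fun n : ℕ => -(1/π) * ((-1)^n * Real.sin (n * (π * α)) * Real.exp (-(n * α * y)))) = fun n => -(1 / π) * (z ^ n).im := by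
    ext n
    have : (z ^ n) = (((-1)^n * Real.exp (-(n*α*y)) : ℝ) : ℂ) * Complex.exp ((n * (π * α) : ℝ) * Complex.I) := by
      rw [hz, neg_pow, ← Complex.exp_nat_mul]
      push_cast
      rw [mul_assoc ((-1:ℂ)^n), ← Complex.exp_add]
      ring_nf
    rw [this, Complex.im_ofReal_mul, Complex.exp_ofReal_mul_I_im]
    ring
  have e2 : kk α y = -(1 / π) * (1 - z)⁻¹.im := by
    rw [kk_def, Complex.inv_im]
    have hre : z.re = -(Real.exp (-(α*y)) * Real.cos (π * α)) := by
      rw [hz, Complex.neg_re, Complex.exp_re]; simp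
    have him : z.im = -(Real.exp (-(α*y)) * Real.sin (π * α)) := by
      rw [hz, Complex.neg_im, Complex.exp_im]; simp
    rw [Complex.normSq_apply]
    simp only [Complex.sub_re, Complex.sub_im, Complex.one_re, Complex.one_im, hre, him]
    have hp := den_pos h0 h1 y
    have e : Real.exp (α * y) = (Real.exp (-(α * y)))⁻¹ := by rw [Real.exp_neg, inv_inv]
    rw [e] at hp ⊢
    have hx := Real.exp_pos (-(α * y))
    set X := Real.exp (-(α * y))
    have sc := Real.sin_sq_add_cos_sq (π * α)
    have e2 : (1 - -(X * Real.cos (π*α))) * (1 - -(X * Real.cos (π*α))) + (0 - -(X * Real.sin (π*α))) * (0 - -(X * Real.sin (π*α)))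
       = X * (X⁻¹ + X + 2 * Real.cos (π*α)) := by
      field_simp; linear_combination X^2 * sc
    rw [e2]
    field_simp
    ring
  rw [e1, e2]; exact hs2

lemma kk_half2 {α : ℝ} (h0 : 0 < α) (h1 : α < 1) :
    ∫ y in Set.Ioi (0:ℝ), y^2 * kk α y = π^2*(1-α^2)/(6*α^2) := by
  have hm : ∀ n : ℕ, n ≠ 0 → ∫ y in Set.Ioi (0:ℝ), y^2 * Real.exp (-(n * α * y)) = 2 / (n * α)^3 := by
    intro n hn
    have hn' : (0:ℝ) < n := by positivity
    have := integral_rpow_mul_exp_neg_mul_Ioi (a := 3) (r := n * α) (by norm_num) (by positivity)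
    have g3 : Real.Gamma 3 = 2 := by
      have := Real.Gamma_nat_eq_factorial 2
      rw [show ((2:ℕ):ℝ) + 1 = 3 by norm_num] at this
      rw [this]; norm_num [Nat.factorial]
    rw [g3] at this
    norm_num at this
    rw [this]; field_simp
  let F : ℕ → ℝ → ℝ := fun n y => -(1/π) * ((-1)^n * Real.sin (n * (π * α))) * (y^2 * Real.exp (-(n * α * y)))
  have hF : ∀ n, Integrable (F n) (volume.restrict (Set.Ioi 0)) := by
    intro n
    by_cases hn : n = 0
    · simp [F, hn]
    · refine Integrable.const_mul ?_ _
      apply Integrable.of_integral_ne_zero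
      rw [hm n hn]; positivity
  have hsumm : Summable fun n : ℕ => (1/π) * (2/α^3) * (1 / (n:ℝ)^3) := 
    (Real.summable_one_div_nat_pow.mpr (by norm_num)).mul_left _
  have hbound : ∀ n, ∫ y in Set.Ioi (0:ℝ), ‖F n y‖ ≤ (1/π) * (2/α^3) * (1 / (n:ℝ)^3) := by
    intro n
    by_cases hn : n = 0
    · simp [F, hn]
    · have hn' : (0:ℝ) < n := by positivity
      have e : ∀ y : ℝ, ‖F n y‖ = (1/π * |Real.sin (n * (π * α))|) * (y^2 * Real.exp (-(n * α * y))) := by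
        intro y
        simp only [F, Real.norm_eq_abs, abs_mul, abs_neg, abs_pow, abs_one, one_pow, one_mul, Real.abs_exp, sq_abs]
        rw [abs_of_pos (by positivity)]
      simp only [e]
      rw [integral_const_mul, hm n hn]
      have := Real.abs_sin_le_one (n * (π * α))
      calc _ ≤ (1/π * 1) * (2 / (n * α)^3) := by gcongr
        _ = _ := by field_simp
  have H := hasSum_integral_of_summable_integral_norm hF (Summable.of_nonneg_of_le (fun n => integral_nonneg fun y => norm_nonneg _) hbound hsumm)
  have e1 : ∫ y in Set.Ioi (0:ℝ), ∑' n, F n y = ∫ y in Set.Ioi (0:ℝ), y^2 * kk α y := by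
    refine setIntegral_congr_fun measurableSet_Ioi ?_
    intro y hy
    have := (kk_series h0 h1 hy).mul_left (y^2)
    simp only
    rw [← this.tsum_eq]
    congr 1; ext n; simp only [F]; ring
  rw [e1] at H
  have H2 := (sin_series h0 h1).mul_left (-(1/π) * (2/α^3))
  have e2 : (fun n : ℕ => -(1/π) * (2/α^3) * (1 / (n:ℝ)^3 * ((-1)^n * Real.sin (n * (π * α))))) = fun n => ∫ y in Set.Ioi (0:ℝ), F n y := by
    ext n
    by_cases hn : n = 0
    · simp [F, hn]
    · simp only [F]
      rw [integral_const_mul, hm n hn]; field_simp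
  rw [e2] at H2
  rw [H.unique H2]
  field_simp; ring

lemma kk_int2 {α : ℝ} (h0 : 0 < α) (h1 : α < 1) :
    Integrable (fun y => y^2 * kk α y) ∧ ∫ y, y^2 * kk α y = π^2*(1-α^2)/(3*α^2) := by
  have h : ∫ y, y^2 * kk α y = π^2*(1-α^2)/(3*α^2) := by
    have := integral_comp_abs (f := fun y => y^2 * kk α y)
    simp only [kk_abs, sq_abs] at this
    rw [this, kk_half2 h0 h1]; field_simp; ring
  refine ⟨Integrable.of_integral_ne_zero ?_, h⟩
  rw [h]
  have : 0 < 1 - α^2 := by nlinarith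
  positivity

lemma exp_add_one_ne {α : ℝ} {w : ℂ} (hw : |α * w.im| < π) : Complex.exp (α * w) + 1 ≠ 0 := by
  intro h
  have h1 : Complex.exp (α * w) = -1 := by linear_combination h
  have hre := congrArg Complex.re h1
  have him := congrArg Complex.im h1
  rw [Complex.exp_re] at hre
  rw [Complex.exp_im] at him
  simp only [Complex.mul_re, Complex.mul_im, Complex.ofReal_re, Complex.ofReal_im, zero_mul, sub_zero, add_zero,
    Complex.neg_re, Complex.neg_im, Complex.one_re, Complex.one_im, neg_zero] at hre him
  have hs : Real.sin (α * w.im) = 0 := by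
    rcases mul_eq_zero.mp him with h | h
    · exact absurd h (Real.exp_pos _).ne'
    · exact h
  have := abs_lt.mp hw
  rw [Real.sin_eq_zero_iff_of_lt_of_lt this.1 this.2] at hs
  rw [hs, Real.cos_zero] at hre
  have := Real.exp_pos (α * w.re)
  linarith

lemma exp_sub_ne {x : ℝ} {w : ℂ} (hw : |w.im| < 2 * π) (hne : w ≠ x) : Complex.exp w - Complex.exp x ≠ 0 := by
  intro h
  have h1 : Complex.exp w = Complex.exp x := by linear_combination h
  obtain ⟨n, hn⟩ := Complex.exp_eq_exp_iff_exists_int.mp h1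
  have him := congrArg Complex.im hn
  simp at him
  rw [him, abs_mul, abs_of_pos (by positivity : 0 < 2 * π)] at hw
  have : |(n:ℝ)| < 1 := by
    by_contra hc
    push Not at hc
    nlinarith [Real.pi_pos]
  have h0 : n = 0 := by
    have : |n| < 1 := by exact_mod_cast this
    exact Int.abs_lt_one_iff.mp this
  apply hne; rw [hn, h0]; simp

noncomputable def hh (α : ℝ) (w : ℂ) : ℂ := 1 / (Complex.exp (α * w) + 1)

noncomputable def Psi (α x : ℝ) (w : ℂ) : ℂ :=
  (hh α w - hh α x) * (Complex.exp w / (Complex.exp w - Complex.exp x))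

noncomputable def Phi (α x : ℝ) (w : ℂ) : ℂ :=
  dslope (hh α) x w * (Complex.exp w / dslope Complex.exp x w)

lemma Phi_eq (α x : ℝ) {w : ℂ} (hne : w ≠ x) : Phi α x w = Psi α x w := by
  have : w - (x:ℂ) ≠ 0 := sub_ne_zero.mpr hne
  rw [Phi, Psi, dslope_of_ne _ hne, dslope_of_ne _ hne, slope_def_field, slope_def_field]
  rw [div_div_eq_mul_div, div_mul_div_comm, mul_div_assoc', ← mul_assoc, mul_comm (w - (x:ℂ)), mul_div_mul_right _ _ this]

lemma Phi_diff {α : ℝ} (x : ℝ) :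
    DifferentiableOn ℂ (Phi α x) {w : ℂ | |α * w.im| < π ∧ |w.im| < 2 * π} := by
  have hU : IsOpen {w : ℂ | |α * w.im| < π ∧ |w.im| < 2 * π} := by
    have o1 : IsOpen {w : ℂ | |α * w.im| < π} :=
      isOpen_lt (continuous_const.mul Complex.continuous_im).abs continuous_const
    have o2 : IsOpen {w : ℂ | |w.im| < 2 * π} :=
      isOpen_lt Complex.continuous_im.abs continuous_const
    exact o1.inter o2
  have hx : (x:ℂ) ∈ {w : ℂ | |α * w.im| < π ∧ |w.im| < 2 * π} := by
    simp [Real.pi_pos]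
  have hn := hU.mem_nhds hx
  unfold Phi
  refine DifferentiableOn.mul ?_ (DifferentiableOn.div (Complex.differentiable_exp.differentiableOn) ?_ ?_)
  · rw [Complex.differentiableOn_dslope hn]
    unfold hh
    refine DifferentiableOn.div (by fun_prop) (by fun_prop) ?_
    intro w hw
    exact exp_add_one_ne hw.1
  · rw [Complex.differentiableOn_dslope hn]
    exact Complex.differentiable_exp.differentiableOn
  · intro w hw
    by_cases hne : w = x
    · rw [hne, dslope_same]; simp [Complex.exp_ne_zero]
    · rw [dslope_of_ne _ hne, slope_def_field]
      exact div_ne_zero (exp_sub_ne hw.2 hne) (sub_ne_zero.mpr hne)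

lemma Psi_meas (α x A : ℝ) : Measurable (fun v : ℝ => Psi α x (A + v * Complex.I)) := by
  unfold Psi hh
  fun_prop

lemma norm_exp_Av (α A v : ℝ) : ‖Complex.exp (α * (A + v * Complex.I))‖ = Real.exp (α * A) := by
  rw [Complex.norm_exp]; simp

lemma Psi_top {α : ℝ} (h0 : 0 < α) (x : ℝ) :
    Filter.Tendsto (fun A : ℝ => ∫ v in (-π)..π, Psi α x (A + v * Complex.I)) Filter.atTop
      (nhds (∫ v in (-π)..π, -hh α x)) := by
  have hexp : ∀ β : ℝ, 0 < β → Filter.Tendsto (fun A : ℝ => Real.exp (β * A)) Filter.atTop Filter.atTop :=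
    fun β hβ => Real.tendsto_exp_atTop.comp (Filter.tendsto_id.const_mul_atTop hβ)
  have hE : ∀ v : ℝ, ∀ β : ℝ, 0 < β → Filter.Tendsto (fun A : ℝ => Complex.exp (β * (A + v * Complex.I))) Filter.atTop (Bornology.cobounded ℂ) := by
    intro v β hβ
    rw [← tendsto_norm_atTop_iff_cobounded]
    simp only [norm_exp_Av]
    exact hexp β hβ
  refine intervalIntegral.tendsto_integral_filter_of_dominated_convergence (fun _ => (1 + ‖hh α x‖) * 2) ?_ ?_ ?_ ?_
  · exact Filter.Eventually.of_forall fun A => (Psi_meas α x A).aestronglyMeasurable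
  · filter_upwards [(hexp α h0).eventually_ge_atTop 2, (hexp 1 one_pos).eventually_ge_atTop (2 * Real.exp x)] with A h1 h2
    refine Filter.Eventually.of_forall fun v _ => ?_
    rw [Psi, norm_mul]
    have n1 := norm_exp_Av α A v
    have n2 := norm_exp_Av 1 A v
    have n3 : ‖Complex.exp x‖ = Real.exp x := by rw [Complex.norm_exp]; simp
    simp only [Complex.ofReal_one, one_mul] at n2 h2
    have a1 : ‖hh α (A + v * Complex.I)‖ ≤ 1 := by
      rw [hh, norm_div, norm_one]
      have := norm_sub_le_norm_add (Complex.exp (α * (A + v * Complex.I))) 1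
      rw [n1, norm_one] at this
      rw [div_le_one (by linarith)]; linarith
    have a2 : ‖Complex.exp (A + v * Complex.I) / (Complex.exp (A + v * Complex.I) - Complex.exp x)‖ ≤ 2 := by
      rw [norm_div]
      have := norm_sub_norm_le (Complex.exp (A + v * Complex.I)) (Complex.exp x)
      rw [n2, n3] at this
      have := Real.exp_pos x
      rw [n2, div_le_iff₀ (by linarith)]
      linarith
    gcongr
    exact (norm_sub_le _ _).trans (by linarith)
  · simp
  · refine Filter.Eventually.of_forall fun v _ => ?_
    have t1 : Filter.Tendsto (fun A : ℝ => hh α (A + v * Complex.I)) Filter.atTop (nhds 0) := by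
      unfold hh
      simp only [one_div]
      refine Filter.tendsto_inv₀_cobounded.comp ?_
      rw [← tendsto_norm_atTop_iff_cobounded]
      refine Filter.tendsto_atTop_mono (f := fun A : ℝ => Real.exp (α * A) + (-1)) ?_ (Filter.tendsto_atTop_add_const_right _ _ (hexp α h0))
      intro A
      have := norm_sub_le_norm_add (Complex.exp (α * (A + v * Complex.I))) 1
      rw [norm_exp_Av, norm_one] at this
      linarith
    have t2 : Filter.Tendsto (fun A : ℝ => Complex.exp (A + v * Complex.I) / (Complex.exp (A + v * Complex.I) - Complex.exp x)) Filter.atTop (nhds 1) := by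
      have h := Filter.tendsto_inv₀_cobounded.comp (hE v 1 one_pos)
      simp only [Complex.ofReal_one, one_mul] at h
      have h3 : Filter.Tendsto (fun A : ℝ => (1 - Complex.exp x * (Complex.exp (A + v * Complex.I))⁻¹)⁻¹) Filter.atTop (nhds (1 - Complex.exp x * 0)⁻¹) := by
        refine Filter.Tendsto.inv₀ ?_ (by simp)
        exact tendsto_const_nhds.sub (h.const_mul _)
      simp only [mul_zero, sub_zero, inv_one] at h3
      refine h3.congr fun A => ?_
      have := Complex.exp_ne_zero (A + v * Complex.I)
      rw [← inv_div, sub_div, div_self this]; rfl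
    have := (t1.sub_const (hh α x)).mul t2
    simpa [Psi] using this

lemma Psi_bot {α : ℝ} (h0 : 0 < α) (x : ℝ) :
    Filter.Tendsto (fun A : ℝ => ∫ v in (-π)..π, Psi α x (((-A : ℝ) : ℂ) + v * Complex.I)) Filter.atTop
      (nhds (∫ v in (-π)..π, (0:ℂ))) := by
  have hexp : ∀ β : ℝ, 0 < β → Filter.Tendsto (fun A : ℝ => Real.exp (β * (-A))) Filter.atTop (nhds 0) :=
    fun β hβ => Real.tendsto_exp_atBot.comp (Filter.tendsto_neg_atTop_atBot.const_mul_atBot hβ)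
  have hE : ∀ v : ℝ, ∀ β : ℝ, 0 < β → Filter.Tendsto (fun A : ℝ => Complex.exp (β * (((-A : ℝ) : ℂ) + v * Complex.I))) Filter.atTop (nhds 0) := by
    intro v β hβ
    rw [tendsto_zero_iff_norm_tendsto_zero]
    simp only [norm_exp_Av]
    exact hexp β hβ
  refine intervalIntegral.tendsto_integral_filter_of_dominated_convergence (fun _ => (2 + ‖hh α x‖) * 1) ?_ ?_ ?_ ?_
  · exact Filter.Eventually.of_forall fun A => (Psi_meas α x (-A)).aestronglyMeasurable
  · filter_upwards [(hexp α h0).eventually_le_const (show (0:ℝ) < 1/2 by norm_num), (hexp 1 one_pos).eventually_le_const (show 0 < Real.exp x / 2 by positivity)] with A h1 h2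
    refine Filter.Eventually.of_forall fun v _ => ?_
    rw [Psi, norm_mul]
    have n1 := norm_exp_Av α (-A) v
    have n2 := norm_exp_Av 1 (-A) v
    have n3 : ‖Complex.exp x‖ = Real.exp x := by rw [Complex.norm_exp]; simp
    simp only [Complex.ofReal_one, one_mul] at n2 h2
    have a1 : ‖hh α (((-A : ℝ) : ℂ) + v * Complex.I)‖ ≤ 2 := by
      rw [hh, norm_div, norm_one]
      have := norm_sub_le_norm_add 1 (Complex.exp (α * (((-A : ℝ) : ℂ) + v * Complex.I))) 
      rw [n1, norm_one, add_comm] at this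
      rw [div_le_iff₀ (by linarith)]; linarith
    have a2 : ‖Complex.exp (((-A : ℝ) : ℂ) + v * Complex.I) / (Complex.exp (((-A : ℝ) : ℂ) + v * Complex.I) - Complex.exp x)‖ ≤ 1 := by
      rw [norm_div]
      have := norm_sub_norm_le (Complex.exp x) (Complex.exp (((-A : ℝ) : ℂ) + v * Complex.I)) 
      rw [n2, n3, norm_sub_rev] at this
      have := Real.exp_pos x
      rw [n2, div_le_iff₀ (by linarith)]
      linarith
    gcongr
    exact (norm_sub_le _ _).trans (by linarith)
  · simp
  · refine Filter.Eventually.of_forall fun v _ => ?_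
    have t1 : Filter.Tendsto (fun A : ℝ => hh α (((-A : ℝ) : ℂ) + v * Complex.I)) Filter.atTop (nhds (1 / (0 + 1))) := by
      unfold hh
      exact tendsto_const_nhds.div ((hE v α h0).add_const 1) (by simp)
    have t2 : Filter.Tendsto (fun A : ℝ => Complex.exp (((-A : ℝ) : ℂ) + v * Complex.I) / (Complex.exp (((-A : ℝ) : ℂ) + v * Complex.I) - Complex.exp x)) Filter.atTop (nhds (0 / (0 - Complex.exp x))) := by
      have h := hE v 1 one_pos
      simp only [Complex.ofReal_one, one_mul] at h
      exact h.div (h.sub_const _) (by simp [Complex.exp_ne_zero])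
    have := (t1.sub_const (hh α x)).mul t2
    simpa [Psi] using this

lemma exp_pi_shift (y : ℝ) (ε : ℝ) (hε : ε = 1 ∨ ε = -1) :
    Complex.exp (y + ((ε * π : ℝ) : ℂ) * Complex.I) = -(Real.exp y : ℂ) := by
  rw [Complex.exp_add]
  rcases hε with rfl | rfl
  · simp
  · have : ((((-1:ℝ) * π : ℝ) : ℂ) * Complex.I) = -(π * Complex.I) := by push_cast; ring
    rw [this, Complex.exp_neg, Complex.exp_pi_mul_I]; simp

lemma hh_diff {α : ℝ} (h0 : 0 < α) (h1 : α < 1) (y : ℝ) :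
    hh α (y + ((-π : ℝ) : ℂ) * Complex.I) - hh α (y + (π:ℂ) * Complex.I) = 2 * π * Complex.I * kk α y := by
  have hπ : (π:ℂ) ≠ 0 := by exact_mod_cast Real.pi_ne_zero
  have b1 : Complex.exp (α * (y + ((-π : ℝ) : ℂ) * Complex.I)) + 1 ≠ 0 := by
    apply exp_add_one_ne
    simp [abs_mul, abs_of_pos h0, abs_of_pos Real.pi_pos]; nlinarith [Real.pi_pos]
  have b2 : Complex.exp (α * (y + (π : ℂ) * Complex.I)) + 1 ≠ 0 := by
    apply exp_add_one_ne
    simp [abs_mul, abs_of_pos h0, abs_of_pos Real.pi_pos]; nlinarith [Real.pi_pos]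
  rw [hh, hh, div_sub_div _ _ b1 b2, div_eq_iff (mul_ne_zero b1 b2), kk_def]
  have hp := den_pos h0 h1 y
  have e1 : Complex.exp (α * (y + ((-π : ℝ) : ℂ) * Complex.I)) = Real.exp (α * y) * (Real.cos (π * α) - Real.sin (π * α) * Complex.I) := by
    rw [show (α * (y + ((-π : ℝ) : ℂ) * Complex.I)) = ((α * y : ℝ) : ℂ) + ((-(π * α) : ℝ) : ℂ) * Complex.I by push_cast; ring,
      Complex.exp_add, Complex.exp_mul_I, ← Complex.ofReal_cos, ← Complex.ofReal_sin, Real.cos_neg, Real.sin_neg]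
    push_cast; ring
  have e2 : Complex.exp (α * (y + (π : ℂ) * Complex.I)) = Real.exp (α * y) * (Real.cos (π * α) + Real.sin (π * α) * Complex.I) := by
    rw [show (α * (y + (π : ℂ) * Complex.I)) = ((α * y : ℝ) : ℂ) + (((π * α) : ℝ) : ℂ) * Complex.I by push_cast; ring,
      Complex.exp_add, Complex.exp_mul_I, ← Complex.ofReal_cos, ← Complex.ofReal_sin]
    push_cast; ring
  rw [e1, e2]
  have e : Real.exp (-(α * y)) = (Real.exp (α * y))⁻¹ := Real.exp_neg _
  rw [e] at hp ⊢
  have hx := Real.exp_pos (α * y)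
  set X := Real.exp (α * y)
  have sc := Real.sin_sq_add_cos_sq (π * α)
  set S := Real.sin (π * α)
  set C := Real.cos (π * α)
  have sc' : (S:ℂ)^2 + (C:ℂ)^2 = 1 := by exact_mod_cast sc
  have prod : ((X:ℂ) * (C - S * Complex.I) + 1) * ((X:ℂ) * (C + S * Complex.I) + 1) = ((X * (X + X⁻¹ + 2 * C) : ℝ) : ℂ) := by
    have : X * (X + X⁻¹ + 2 * C) = X^2 + 1 + 2 * C * X := by field_simp
    rw [this]; push_cast
    linear_combination (X:ℂ)^2 * sc' - (X:ℂ)^2 * (S:ℂ)^2 * Complex.I_sq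
  rw [prod]
  have : S / π / (X + X⁻¹ + 2 * C) * (X * (X + X⁻¹ + 2 * C)) = S * X / π := by
    have key : ∀ D : ℝ, D ≠ 0 → S / π / D * (X * D) = S * X / π := by
      intro D hD
      field_simp
    exact key _ hp.ne'
  rw [mul_assoc _ _ (((X * (X + X⁻¹ + 2 * C) : ℝ) : ℂ)), ← Complex.ofReal_mul, this]
  push_cast
  field_simp
  ring

lemma stieltjes {α : ℝ} (h0 : 0 < α) (h1 : α < 1) (x : ℝ) :
    ∫ y, kk α y * (Real.exp y / (Real.exp y + Real.exp x)) = 1 / (Real.exp (α * x) + 1) := by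
  have h_int : Integrable (fun y => kk α y * (Real.exp y / (Real.exp y + Real.exp x))) := by
    refine (kk_int h0 h1).1.mul_bdd (c := 1) ?_ ?_
    · exact (by fun_prop : Measurable (fun y => Real.exp y / (Real.exp y + Real.exp x))).aestronglyMeasurable
    · refine Filter.Eventually.of_forall fun y => ?_
      rw [Real.norm_of_nonneg (by positivity), div_le_one (by positivity)]
      linarith [Real.exp_pos x]
  have hrect : ∀ A : ℝ, (|x| < A) → (∫ y in (-A)..A, ((2 * π * (kk α y * (Real.exp y / (Real.exp y + Real.exp x))) : ℝ) : ℂ)) * Complex.I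
      + Complex.I * (∫ v in (-π)..π, Psi α x (A + v * Complex.I)) 
      - Complex.I * (∫ v in (-π)..π, Psi α x (((-A : ℝ) : ℂ) + v * Complex.I)) = 0 := by
    intro A hA
    have hA' := abs_lt.mp hA
    have hπ := Real.pi_pos
    have H := Complex.integral_boundary_rect_eq_zero_of_differentiableOn (Phi α x) ⟨-A, -π⟩ ⟨A, π⟩ (by
      refine (Phi_diff x).mono ?_
      intro w hw
      have hw2 := hw.2
      simp only [Set.mem_preimage] at hw2
      rw [Set.uIcc_of_le (by linarith)] at hw2
      have : |w.im| ≤ π := abs_le.mpr hw2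
      refine ⟨?_, by linarith⟩
      rw [abs_mul, abs_of_pos h0]
      nlinarith [abs_nonneg w.im])
    simp only at H
    have r1 : ∀ v : ℝ, Phi α x (A + v * Complex.I) = Psi α x (A + v * Complex.I) := fun v => Phi_eq α x (by
      intro h; have := congrArg Complex.re h; simp at this; linarith)
    have r2 : ∀ v : ℝ, Phi α x (((-A : ℝ) : ℂ) + v * Complex.I) = Psi α x (((-A : ℝ) : ℂ) + v * Complex.I) := fun v => Phi_eq α x (by
      intro h; have := congrArg Complex.re h; simp at this; linarith)
    have r3 : ∀ ε : ℝ, (ε = 1 ∨ ε = -1) → ∀ y : ℝ, Phi α x (y + ((ε * π : ℝ) : ℂ) * Complex.I) = 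
        (hh α (y + ((ε * π : ℝ) : ℂ) * Complex.I) - hh α x) * ((Real.exp y / (Real.exp y + Real.exp x) : ℝ) : ℂ) := by
      intro ε hε y
      rw [Phi_eq α x (by
        intro h; have := congrArg Complex.im h
        rcases hε with rfl | rfl <;> simp at this), Psi, exp_pi_shift y ε hε]
      congr 1
      push_cast
      rw [← neg_div_neg_eq]
      congr 1
      · ring
      · ring
    have cont : ∀ ε : ℝ, (ε = 1 ∨ ε = -1) → Continuous (fun y : ℝ => Phi α x (y + ((ε * π : ℝ) : ℂ) * Complex.I)) := by
      intro ε hε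
      have : ∀ y : ℝ, (y + ((ε * π : ℝ) : ℂ) * Complex.I) ∈ {w : ℂ | |α * w.im| < π ∧ |w.im| < 2 * π} := by
        intro y
        rcases hε with rfl | rfl <;> simp [abs_mul, abs_of_pos h0, abs_of_pos hπ] <;> constructor <;> nlinarith
      exact (Phi_diff x).continuousOn.comp_continuous (by fun_prop) this
    have c1 := cont 1 (Or.inl rfl)
    have c2 := cont (-1) (Or.inr rfl)
    have q1 := r3 1 (Or.inl rfl)
    have q2 := r3 (-1) (Or.inr rfl)
    simp only [one_mul, neg_one_mul] at c1 c2 q1 q2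
    rw [← intervalIntegral.integral_sub (c2.intervalIntegrable _ _) (c1.intervalIntegrable _ _)] at H
    simp only [r1, r2, smul_eq_mul] at H
    rw [← H, ← intervalIntegral.integral_mul_const]
    congr 3
    ext y
    rw [q1, q2, ← sub_mul]
    have := hh_diff h0 h1 y
    rw [sub_sub_sub_cancel_right, this]
    push_cast
    ring
  have h_intC : Integrable (fun y : ℝ => ((2 * π * (kk α y * (Real.exp y / (Real.exp y + Real.exp x))) : ℝ) : ℂ)) :=
    (h_int.const_mul (2 * π)).ofReal
  have T1 := intervalIntegral_tendsto_integral h_intC Filter.tendsto_neg_atTop_atBot Filter.tendsto_id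
  have T := ((T1.mul_const Complex.I).add ((Psi_top h0 x).const_mul Complex.I)).sub ((Psi_bot h0 x).const_mul Complex.I)
  have T0 := T.congr' (f₂ := fun _ => (0:ℂ)) (by
    filter_upwards [Filter.eventually_gt_atTop |x|] with A hA using hrect A hA)
  have V := tendsto_nhds_unique T0 tendsto_const_nhds
  rw [integral_complex_ofReal, integral_const_mul] at V
  have hhx : hh α x = ((1 / (Real.exp (α * x) + 1) : ℝ) : ℂ) := by
    rw [hh]; push_cast; rfl
  rw [hhx] at V
  simp only [intervalIntegral.integral_const] at V
  generalize (∫ y, kk α y * (Real.exp y / (Real.exp y + Real.exp x))) = J at V ⊢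
  generalize (1 / (Real.exp (α * x) + 1)) = K at V ⊢
  have W := congrArg Complex.im V
  simp at W
  have hπ := Real.pi_pos
  have : 2 * π * (J - K) = 0 := by linarith
  rcases mul_eq_zero.mp this with h | h
  · linarith
  · linarith


lemma ml_laplace {α s : ℝ} (h0 : 0 < α) (hs : 1 < s) :
    IntegrableOn (fun t : ℝ => Real.exp (-(s * t)) * (t ^ (α - 1) * mittagLeffler α α (-(t ^ α)))) (Set.Ioi 0) ∧ 
    ∫ t in Set.Ioi (0:ℝ), Real.exp (-(s * t)) * (t ^ (α - 1) * mittagLeffler α α (-(t ^ α))) = 1 / (s ^ α + 1) := by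
  have hs0 : 0 < s := by linarith
  let F : ℕ → ℝ → ℝ := fun n t => ((-1)^n / Real.Gamma (α * n + α)) * (t ^ (α * n + α - 1) * Real.exp (-(s * t)))
  have hpos : ∀ n : ℕ, 0 < α * n + α := fun n => by positivity
  have hG : ∀ n : ℕ, 0 < Real.Gamma (α * n + α) := fun n => Real.Gamma_pos_of_pos (hpos n)
  have hI : ∀ n : ℕ, ∫ t in Set.Ioi (0:ℝ), t ^ (α * n + α - 1) * Real.exp (-(s * t)) = (1/s) ^ (α * n + α) * Real.Gamma (α * n + α) :=
    fun n => integral_rpow_mul_exp_neg_mul_Ioi (hpos n) hs0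
  have hF : ∀ n, Integrable (F n) (volume.restrict (Set.Ioi 0)) := by
    intro n
    refine Integrable.const_mul ?_ _
    apply Integrable.of_integral_ne_zero
    rw [hI n]; exact (mul_pos (by positivity) (hG n)).ne'
  set q : ℝ := (1/s) ^ α with hq
  have hq0 : 0 < q := by positivity
  have hq1 : q < 1 := Real.rpow_lt_one (by positivity) (by rw [div_lt_one hs0]; exact hs) h0
  have hqn : ∀ n : ℕ, (1/s) ^ (α * n + α) = q ^ n * q := by
    intro n
    rw [Real.rpow_add (by positivity), Real.rpow_mul_natCast (by positivity)]
  have hnorm : ∀ n, ∫ t in Set.Ioi (0:ℝ), ‖F n t‖ = q ^ n * q := by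
    intro n
    have e : Set.EqOn (fun t => ‖F n t‖) (fun t => (1 / Real.Gamma (α * n + α)) * (t ^ (α * n + α - 1) * Real.exp (-(s * t)))) (Set.Ioi 0) := by
      intro t ht
      have ht' : (0:ℝ) < t := ht
      simp only [F, Real.norm_eq_abs, abs_mul, abs_div, abs_pow, abs_neg, abs_one, one_pow, Real.abs_exp]
      rw [abs_of_pos (hG n), abs_of_pos (by positivity)]
    rw [setIntegral_congr_fun measurableSet_Ioi e, integral_const_mul, hI, hqn]
    have := (hG n).ne'
    field_simp
  have H := hasSum_integral_of_summable_integral_norm hF (by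
    simp only [hnorm]
    exact (summable_geometric_of_lt_one hq0.le hq1).mul_right q)
  have e1 : ∫ t in Set.Ioi (0:ℝ), ∑' n, F n t = ∫ t in Set.Ioi (0:ℝ), Real.exp (-(s * t)) * (t ^ (α - 1) * mittagLeffler α α (-(t ^ α))) := by
    refine setIntegral_congr_fun measurableSet_Ioi ?_
    intro t ht
    have ht' : (0:ℝ) < t := ht
    simp only [mittagLeffler]
    rw [← tsum_mul_left, ← tsum_mul_left]
    congr 1; ext n
    simp only [F]
    rw [show α * n + α - 1 = (α - 1) + α * n by ring, Real.rpow_add ht', Real.rpow_mul_natCast ht'.le, neg_pow (t ^ α) n]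
    ring
  rw [e1] at H
  have e2 : (fun n => ∫ t in Set.Ioi (0:ℝ), F n t) = fun n => (-q)^n * q := by
    ext n
    simp only [F]
    rw [integral_const_mul, hI, hqn, neg_pow q n]
    have := (hG n).ne'
    field_simp
  rw [e2] at H
  have H2 := (hasSum_geometric_of_abs_lt_one (r := -q) (by rw [abs_neg, abs_of_pos hq0]; exact hq1)).mul_right q
  have hv := H.unique H2
  have e3 : (1 - -q)⁻¹ * q = 1 / (s ^ α + 1) := by
    have : q = (s ^ α)⁻¹ := by rw [hq, one_div, Real.inv_rpow hs0.le]
    have h4 : 0 < s ^ α := by positivity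
    have h5 : 1 - -(s ^ α)⁻¹ = (s ^ α + 1) / s ^ α := by field_simp; ring
    rw [this, h5, inv_div]; field_simp
  rw [e3] at hv
  refine ⟨Integrable.of_integral_ne_zero ?_, hv⟩
  rw [hv]; positivity

noncomputable def gg (α t : ℝ) : ℝ := ∫ y, kk α y * (Real.exp y * Real.exp (-(Real.exp y * t)))

lemma gg_fubini {α : ℝ} (h0 : 0 < α) (h1 : α < 1) (w V : ℝ → ℝ) (hw : Measurable w) (hw0 : ∀ t, 0 ≤ w t)
    (hV : ∀ y, IntegrableOn (fun t => w t * (Real.exp y * Real.exp (-(Real.exp y * t)))) (Set.Ioi 0) ∧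
      ∫ t in Set.Ioi (0:ℝ), w t * (Real.exp y * Real.exp (-(Real.exp y * t))) = V y)
    (hk : Integrable (fun y => kk α y * V y)) :
    IntegrableOn (fun t => w t * gg α t) (Set.Ioi 0) ∧
      ∫ t in Set.Ioi (0:ℝ), w t * gg α t = ∫ y, kk α y * V y := by
  have hkm : Measurable (kk α) := (kk_continuous h0 h1).measurable
  have hm : AEStronglyMeasurable (fun p : ℝ × ℝ => kk α p.1 * (w p.2 * (Real.exp p.1 * Real.exp (-(Real.exp p.1 * p.2)))))
      ((volume : Measure ℝ).prod (volume.restrict (Set.Ioi (0:ℝ)))) := by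
    apply Measurable.aestronglyMeasurable
    fun_prop
  have hI : Integrable (fun p : ℝ × ℝ => kk α p.1 * (w p.2 * (Real.exp p.1 * Real.exp (-(Real.exp p.1 * p.2)))))
      ((volume : Measure ℝ).prod (volume.restrict (Set.Ioi (0:ℝ)))) := by
    rw [integrable_prod_iff hm]
    refine ⟨Filter.Eventually.of_forall fun y => (hV y).1.const_mul (kk α y), ?_⟩
    refine hk.congr (Filter.Eventually.of_forall fun y => ?_)
    simp only
    rw [← (hV y).2, ← integral_const_mul]
    congr 1
    ext t
    rw [Real.norm_of_nonneg]
    have := (kk_pos h0 h1 y).le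
    have := hw0 t
    positivity
  have e : ∀ t, w t * gg α t = ∫ y, kk α y * (w t * (Real.exp y * Real.exp (-(Real.exp y * t)))) := by
    intro t
    rw [gg, ← integral_const_mul]
    congr 1
    ext y
    ring
  simp only [e]
  refine ⟨hI.integral_prod_right, ?_⟩
  rw [← integral_integral_swap hI]
  congr 1
  ext y
  rw [integral_const_mul, (hV y).2]

lemma exp_weight {s r : ℝ} (hs : 0 < s) (hr : 0 < r) :
    IntegrableOn (fun t => Real.exp (-(s * t)) * (r * Real.exp (-(r * t)))) (Set.Ioi 0) ∧
      ∫ t in Set.Ioi (0:ℝ), Real.exp (-(s * t)) * (r * Real.exp (-(r * t))) = r / (r + s) := by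
  have e : ∀ t : ℝ, Real.exp (-(s * t)) * (r * Real.exp (-(r * t))) = r * Real.exp ((-(r + s)) * t) := by
    intro t
    rw [mul_left_comm, ← Real.exp_add]
    ring_nf
  have hn : -(r + s) < 0 := by linarith
  simp only [e]
  refine ⟨(integrableOn_exp_mul_Ioi hn 0).const_mul r, ?_⟩
  rw [integral_const_mul, integral_exp_mul_Ioi hn, mul_zero, Real.exp_zero, neg_div_neg_eq]
  ring

lemma gg_laplace {α s : ℝ} (h0 : 0 < α) (h1 : α < 1) (hs : 0 < s) :
    IntegrableOn (fun t => Real.exp (-(s * t)) * gg α t) (Set.Ioi 0) ∧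
      ∫ t in Set.Ioi (0:ℝ), Real.exp (-(s * t)) * gg α t = 1 / (s ^ α + 1) := by
  have h_int : Integrable (fun y => kk α y * (Real.exp y / (Real.exp y + s))) := by
    refine (kk_int h0 h1).1.mul_bdd (c := 1) ?_ ?_
    · exact (by fun_prop : Measurable (fun y => Real.exp y / (Real.exp y + s))).aestronglyMeasurable
    · refine Filter.Eventually.of_forall fun y => ?_
      rw [Real.norm_of_nonneg (by positivity), div_le_one (by positivity)]
      linarith
  have H := gg_fubini h0 h1 (fun t => Real.exp (-(s * t))) (fun y => Real.exp y / (Real.exp y + s)) (by fun_prop)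
    (fun t => (Real.exp_pos _).le) (fun y => exp_weight hs (Real.exp_pos y)) h_int
  refine ⟨H.1, H.2.trans ?_⟩
  have := stieltjes h0 h1 (Real.log s)
  rw [Real.exp_log hs] at this
  rw [this, Real.rpow_def_of_pos hs, mul_comm α]

lemma ml_eq_gg {α : ℝ} (h0 : 0 < α) (h1 : α < 1) :
    ∀ᵐ t, t ∈ Set.Ioi (0:ℝ) → t ^ (α - 1) * mittagLeffler α α (-(t ^ α)) = gg α t := by
  have hd : ∀ s : ℝ, 1 < s → IntegrableOn (fun t => Real.exp (-(s * t)) * (t ^ (α - 1) * mittagLeffler α α (-(t ^ α)) - gg α t)) (Set.Ioi 0)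
      ∧ ∫ t in Set.Ioi (0:ℝ), Real.exp (-(s * t)) * (t ^ (α - 1) * mittagLeffler α α (-(t ^ α)) - gg α t) = 0 := by
    intro s hs
    have m := ml_laplace h0 hs
    have g := gg_laplace h0 h1 (by linarith : 0 < s)
    simp only [mul_sub]
    refine ⟨m.1.sub g.1, ?_⟩
    rw [integral_sub m.1 g.1, m.2, g.2, sub_self]
  have := laplace_unique (fun t => Real.exp (-(2 * t)) * (t ^ (α - 1) * mittagLeffler α α (-(t ^ α)) - gg α t))
    (hd 2 (by norm_num)).1 (by
      intro n
      have hn : (1:ℝ) < n + 2 := by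
        have : (0:ℝ) ≤ n := Nat.cast_nonneg n
        linarith
      refine Eq.trans ?_ (hd (n + 2) hn).2
      congr 1
      ext t
      rw [← mul_assoc, ← Real.exp_add]
      ring_nf)
  filter_upwards [this] with t ht hpos
  have := ht hpos
  rcases mul_eq_zero.mp this with h | h
  · exact absurd h (Real.exp_pos _).ne'
  · linarith

lemma one_lt_case {α : ℝ} (h0 : 0 < α) (h1 : α < 1) :
    IntegrableOn (fun t => (Real.log t + Real.eulerMascheroniConstant) ^ 2 * (t ^ (α - 1) * mittagLeffler α α (-(t ^ α)))) (Set.Ioi 0)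
    ∧ ∫ t in Set.Ioi (0:ℝ), (Real.log t + Real.eulerMascheroniConstant) ^ 2 * (t ^ (α - 1) * mittagLeffler α α (-(t ^ α)))
      = π ^ 2 * (1 / (3 * α ^ 2) - 1 / 6) := by
  have k1 := kk_int h0 h1
  have k2 := kk_int2 h0 h1
  have ek : ∀ y, kk α y * (π ^ 2 / 6 + y ^ 2) = π ^ 2 / 6 * kk α y + y ^ 2 * kk α y := fun y => by ring
  have i1 : Integrable (fun y => π ^ 2 / 6 * kk α y) := k1.1.const_mul _
  have H := gg_fubini h0 h1 (fun t => (Real.log t + Real.eulerMascheroniConstant) ^ 2) (fun y => π ^ 2 / 6 + y ^ 2)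
    (by fun_prop) (fun t => sq_nonneg _)
    (fun y => by
      have := log_sq_exp Real.eulerMascheroniConstant (Real.exp y) (Real.exp_pos y)
      rw [Real.log_exp, sub_self, zero_sub, neg_sq] at this
      exact this)
    (by simp only [ek]; exact i1.add k2.1)
  have hae : ∀ᵐ t ∂(volume.restrict (Set.Ioi (0:ℝ))), (Real.log t + Real.eulerMascheroniConstant) ^ 2 * gg α t
      = (Real.log t + Real.eulerMascheroniConstant) ^ 2 * (t ^ (α - 1) * mittagLeffler α α (-(t ^ α))) := by
    rw [ae_restrict_iff' measurableSet_Ioi]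
    filter_upwards [ml_eq_gg h0 h1] with t ht hp
    rw [ht hp]
  refine ⟨H.1.congr hae, ?_⟩
  rw [← integral_congr_ae hae, H.2]
  simp only [ek]
  rw [integral_add i1 k2.1, integral_const_mul, k1.2, k2.2]
  field_simp
  ring

lemma one_case {α : ℝ} (h0 : 0 < α) (h1 : α ≤ 1) :
    IntegrableOn (fun t => (Real.log t + Real.eulerMascheroniConstant) ^ 2 * (t ^ (α - 1) * mittagLeffler α α (-(t ^ α)))) (Set.Ioi 0)
    ∧ ∫ t in Set.Ioi (0:ℝ), (Real.log t + Real.eulerMascheroniConstant) ^ 2 * (t ^ (α - 1) * mittagLeffler α α (-(t ^ α)))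
      = π ^ 2 * (1 / (3 * α ^ 2) - 1 / 6) := by
  rcases h1.lt_or_eq with h | rfl
  · exact one_lt_case h0 h
  · have e : ∀ w, mittagLeffler 1 1 w = Real.exp w := by
      intro w
      rw [mittagLeffler, Real.exp_eq_exp_ℝ, NormedSpace.exp_eq_tsum_div]
      congr 1
      ext r
      rw [one_mul, Real.Gamma_nat_eq_factorial]
    have := log_sq_exp Real.eulerMascheroniConstant 1 one_pos
    simp only [one_mul, Real.log_one, sub_self, sub_zero] at this
    simp only [e, sub_self, Real.rpow_zero, Real.rpow_one, one_mul]
    refine ⟨this.1, this.2.trans ?_⟩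
    ring

theorem stmt14 (α θ : ℝ) (hα : α ∈ Set.Ioc (0:ℝ) 1) (hθ : 0 < θ) :
    IntegrableOn
      (fun t : ℝ => (Real.log t + Real.log θ / α + Real.eulerMascheroniConstant) ^ 2
        * (θ * t ^ (α - 1) * mittagLeffler α α (-θ * t ^ α)))
      (Set.Ioi 0) ∧
    (∫ t in Set.Ioi (0:ℝ),
        (Real.log t + Real.log θ / α + Real.eulerMascheroniConstant) ^ 2
          * (θ * t ^ (α - 1) * mittagLeffler α α (-θ * t ^ α)))
      = Real.pi ^ 2 * (1 / (3 * α ^ 2) - 1 / 6) := by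
  obtain ⟨h0, h1⟩ := hα
  have H := one_case h0 h1
  set F : ℝ → ℝ := fun t => (Real.log t + Real.eulerMascheroniConstant) ^ 2 * (t ^ (α - 1) * mittagLeffler α α (-(t ^ α))) with hF
  set c := θ ^ (1 / α) with hc
  have hcp : 0 < c := Real.rpow_pos_of_pos hθ _
  have hca : c ^ α = θ := by
    rw [hc, ← Real.rpow_mul hθ.le, one_div, inv_mul_cancel₀ h0.ne', Real.rpow_one]
  have hlog : Real.log c = Real.log θ / α := by
    rw [hc, Real.log_rpow hθ]; ring
  have e : ∀ t ∈ Set.Ioi (0:ℝ), c * F (c * t) = (Real.log t + Real.log θ / α + Real.eulerMascheroniConstant) ^ 2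
        * (θ * t ^ (α - 1) * mittagLeffler α α (-θ * t ^ α)) := by
    intro t ht
    have ht : 0 < t := ht
    have hc1 : c * c ^ (α - 1) = θ := by
      rw [Real.rpow_sub_one hcp.ne', hca]; field_simp
    simp only [hF]
    rw [Real.log_mul hcp.ne' ht.ne', hlog, Real.mul_rpow hcp.le ht.le, Real.mul_rpow hcp.le ht.le, hca, ← neg_mul,
      add_comm (Real.log θ / α)]
    linear_combination ((Real.log t + Real.log θ / α + Real.eulerMascheroniConstant) ^ 2
        * (t ^ (α - 1) * mittagLeffler α α (-θ * t ^ α))) * hc1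
  have hi : IntegrableOn (fun t => F (c * t)) (Set.Ioi 0) := by
    rw [integrableOn_Ioi_comp_mul_left_iff F 0 hcp, mul_zero]
    exact H.1
  refine ⟨IntegrableOn.congr_fun (Integrable.const_mul hi c) e measurableSet_Ioi, ?_⟩
  rw [← setIntegral_congr_fun measurableSet_Ioi e, integral_const_mul, integral_comp_mul_left_Ioi F 0 hcp, mul_zero, H.2, smul_eq_mul]
  field_simp
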